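/- There exist universal constants C₀ > 0 and ε₀ ∈ (0,1) such that the following holds. In the noise model with ε ∈ (0, ε₀), assume min_{k∈{1,…,m}} Pr_P[Π_k] ≥ √ε and ‖q − E_{X∼P̃}[F(X,q)]‖₂ ≤ ε; let M be a real symmetric m×m matrix with zero diagonal satisfying ‖M − M_{P̃}^0‖₂ ≤ ε, and let α > 0 satisfy |α − min_k Pr_{P̃}[Π_k]| ≤ ε. If ‖M‖₂ ≥ C₀·ε·log(1/ε)/α, then ‖p − q‖₂ ≤ 3·√(ε·‖M‖₂)/α. -/

import Mathlib

open scoped BigOperators Classical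

/-- The index set `S` of parental configurations: pairs `(i, a)` where
`a : Parents i → Bool`. -/
abbrev BNIdx (d : ℕ) (Par : Fin d → Finset (Fin d)) :=
  (i : Fin d) × ({j : Fin d // j ∈ Par i} → Bool)

/-- The restriction of `x ∈ {0,1}^d` to the parents of node `i`. -/
def cfgOf {d : ℕ} (Par : Fin d → Finset (Fin d)) (x : Fin d → Bool) (i : Fin d) :
    {j : Fin d // j ∈ Par i} → Bool :=
  fun j => x j.1

/-- The Bayesian network `P_p` with conditional probability table `p`. -/
noncomputable def bnDist {d : ℕ} (Par : Fin d → Finset (Fin d))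
    (p : BNIdx d Par → ℝ) (x : Fin d → Bool) : ℝ :=
  ∏ i : Fin d, if x i then p ⟨i, cfgOf Par x i⟩ else 1 - p ⟨i, cfgOf Par x i⟩

/-- `Pr_R[Π_k]`, the probability of the parental configuration `k` under `R`. -/
noncomputable def prCfg {d : ℕ} (Par : Fin d → Finset (Fin d))
    (R : (Fin d → Bool) → ℝ) (k : BNIdx d Par) : ℝ :=
  ∑ x : Fin d → Bool, if cfgOf Par x k.1 = k.2 then R x else 0

/-- Probability of an event `A` under `R`. -/
noncomputable def prEvent {d : ℕ} (R : (Fin d → Bool) → ℝ)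
    (A : (Fin d → Bool) → Prop) : ℝ :=
  ∑ x : Fin d → Bool, if A x then R x else 0

/-- Expectation `E_{X ∼ R}[g(X)]`. -/
noncomputable def expec {d : ℕ} (R : (Fin d → Bool) → ℝ)
    (g : (Fin d → Bool) → ℝ) : ℝ :=
  ∑ x : Fin d → Bool, R x * g x

/-- The vector `F(x, q) ∈ ℝ^S`. -/
noncomputable def Fvec {d : ℕ} (Par : Fin d → Finset (Fin d))
    (x : Fin d → Bool) (q : BNIdx d Par → ℝ) (k : BNIdx d Par) : ℝ :=
  if cfgOf Par x k.1 = k.2 then (if x k.1 then 1 else 0) else q k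

/-- `R` is a probability distribution on the finite set `D`. -/
def IsProbDist {D : Type*} [Fintype D] (R : D → ℝ) : Prop :=
  (∀ x, 0 ≤ R x) ∧ ∑ x, R x = 1

/-- Total variation distance. -/
noncomputable def dTV {D : Type*} [Fintype D] (A B : D → ℝ) : ℝ :=
  (∑ x, |A x - B x|) / 2

/-- Squared Hellinger distance `d_H(A,B)² = 1 - Σ √(A(x)·B(x))`. -/
noncomputable def hellingerSq {D : Type*} [Fintype D] (A B : D → ℝ) : ℝ :=
  1 - ∑ x, Real.sqrt (A x * B x)

/-- Euclidean norm on `ℝ^ι`. -/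
noncomputable def enorm2 {ι : Type*} [Fintype ι] (v : ι → ℝ) : ℝ :=
  Real.sqrt (∑ k, v k ^ 2)

/-- The second-moment matrix `M_R` (relative to `q`). -/
noncomputable def covM {d : ℕ} (Par : Fin d → Finset (Fin d))
    (R : (Fin d → Bool) → ℝ) (q : BNIdx d Par → ℝ) :
    Matrix (BNIdx d Par) (BNIdx d Par) ℝ :=
  fun k l => expec R (fun x => (Fvec Par x q k - q k) * (Fvec Par x q l - q l))

/-- `M_R^0`: the matrix `M_R` with zeroed diagonal. -/
noncomputable def covM0 {d : ℕ} (Par : Fin d → Finset (Fin d))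
    (R : (Fin d → Bool) → ℝ) (q : BNIdx d Par → ℝ) :
    Matrix (BNIdx d Par) (BNIdx d Par) ℝ :=
  fun k l => if k = l then 0 else covM Par R q k l

/-- Spectral norm (ℓ²-operator norm) of a real matrix. -/
noncomputable def specNorm {ι : Type*} [Fintype ι] [DecidableEq ι]
    (M : Matrix ι ι ℝ) : ℝ :=
  ‖Matrix.toEuclideanCLM (𝕜 := ℝ) M‖


theorem sum_prod_seq {d : ℕ} (g : Fin d → (Fin d → Bool) → ℝ) (c : Fin d → ℝ)
    (hdep : ∀ i x y, (∀ j, j ≤ i → x j = y j) → g i x = g i y)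
    (hsum : ∀ i x, g i x + g i (Function.update x i (!x i)) = c i) :
    ∑ x : Fin d → Bool, ∏ i, g i x = ∏ i, c i := by
  have key : ∀ n, n ≤ d → ∑ x : Fin d → Bool, ∏ i : Fin d,
      (if i.val < n then g i x else c i / 2) = ∏ i, c i := by
    intro n
    induction n with
    | zero =>
      intro _
      simp [Finset.prod_div_distrib]
      field_simp
    | succ n ih =>
      intro hn
      rw [← ih (by omega)]
      set i0 : Fin d := ⟨n, by omega⟩ with hi0
      set rest : (Fin d → Bool) → ℝ := fun x =>
        ∏ i ∈ Finset.univ.erase i0, (if i.val < n then g i x else c i / 2) with hrest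
      have e1 : ∀ x, ∏ i : Fin d, (if i.val < n + 1 then g i x else c i / 2)
          = rest x * g i0 x := by
        intro x
        rw [← Finset.mul_prod_erase _ _ (Finset.mem_univ i0), mul_comm]
        simp only [hrest]
        congr 1
        · apply Finset.prod_congr rfl
          intro i hi
          have : i ≠ i0 := (Finset.mem_erase.1 hi).1
          have h2 : i.val ≠ n := fun h => this (Fin.ext h)
          by_cases h : i.val < n
          · rw [if_pos h, if_pos (by omega)]
          · rw [if_neg h, if_neg (by omega)]
        · simp [hi0]
      have e2 : ∀ x, ∏ i : Fin d, (if i.val < n then g i x else c i / 2)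
          = rest x * (c i0 / 2) := by
        intro x
        rw [← Finset.mul_prod_erase _ _ (Finset.mem_univ i0), mul_comm]
        simp [hrest, hi0]
      simp only [e1, e2]
      let fl : (Fin d → Bool) → (Fin d → Bool) := fun x => Function.update x i0 (!x i0)
      have hfl : Function.Involutive fl := by
        intro x; simp [fl]
      have hrf : ∀ x, rest (fl x) = rest x := by
        intro x
        simp only [hrest]
        apply Finset.prod_congr rfl
        intro i hi
        have : i ≠ i0 := (Finset.mem_erase.1 hi).1
        by_cases h : i.val < n
        · rw [if_pos h, if_pos h]
          apply hdep
          intro j hj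
          have : j ≠ i0 := by
            intro h'; rw [h'] at hj
            have : n ≤ i.val := hj
            omega
          simp [fl, this]
        · rw [if_neg h, if_neg h]
      have h1 : ∑ x, rest x * g i0 x = ∑ x, rest x * g i0 (fl x) := by
        rw [← Equiv.sum_comp hfl.toPerm (fun x => rest x * g i0 x)]
        apply Finset.sum_congr rfl
        intro x _
        simp only [Function.Involutive.coe_toPerm, hrf]
      have h2 : ∑ x, rest x * g i0 x + ∑ x, rest x * g i0 (fl x)
          = ∑ x, rest x * (c i0 / 2) + ∑ x, rest x * (c i0 / 2) := by
        rw [← Finset.sum_add_distrib, ← Finset.sum_add_distrib]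
        apply Finset.sum_congr rfl
        intro x _
        have := hsum i0 x
        rw [← mul_add, ← mul_add]
        congr 1
        simp only [fl]
        linarith
      linarith
  have := key d le_rfl
  simpa using this

theorem cfg_congr {d : ℕ} {Par : Fin d → Finset (Fin d)}
    (hPar : ∀ i : Fin d, ∀ j ∈ Par i, j < i) (i : Fin d) (x y : Fin d → Bool)
    (h : ∀ j, j < i → x j = y j) : cfgOf Par x i = cfgOf Par y i := by
  funext j
  exact h _ (hPar i _ j.2)

theorem cfg_flip {d : ℕ} {Par : Fin d → Finset (Fin d)}
    (hPar : ∀ i : Fin d, ∀ j ∈ Par i, j < i) (i : Fin d) (x : Fin d → Bool) (b : Bool) :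
    cfgOf Par (Function.update x i b) i = cfgOf Par x i := by
  apply cfg_congr hPar
  intro j hj
  simp [hj.ne]

theorem bn_nonneg {d : ℕ} {Par : Fin d → Finset (Fin d)} {p : BNIdx d Par → ℝ}
    (hp : ∀ k, p k ∈ Set.Icc (0:ℝ) 1) (x : Fin d → Bool) : 0 ≤ bnDist Par p x := by
  apply Finset.prod_nonneg
  intro i _
  have := hp ⟨i, cfgOf Par x i⟩
  split_ifs
  · exact this.1
  · linarith [this.2]

theorem bn_sum {d : ℕ} {Par : Fin d → Finset (Fin d)}
    (hPar : ∀ i : Fin d, ∀ j ∈ Par i, j < i) (p : BNIdx d Par → ℝ) :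
    ∑ x, bnDist Par p x = 1 := by
  unfold bnDist
  rw [sum_prod_seq (c := fun _ => 1)]
  · simp
  · intro i x y h
    rw [h i le_rfl, cfg_congr hPar i x y (fun j hj => h j hj.le)]
  · intro i x
    rw [cfg_flip hPar]
    cases hx : x i <;> simp

/-- martingale difference property -/
theorem bn_zero {d : ℕ} {Par : Fin d → Finset (Fin d)}
    (hPar : ∀ i : Fin d, ∀ j ∈ Par i, j < i) (p : BNIdx d Par → ℝ) (i : Fin d)
    (φ : (Fin d → Bool) → ℝ) (hφ : ∀ x y, (∀ j, j < i → x j = y j) → φ x = φ y) :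
    expec (bnDist Par p) (fun x => φ x * ((if x i then 1 else 0) - p ⟨i, cfgOf Par x i⟩)) = 0 := by
  unfold expec bnDist
  have := sum_prod_seq (d := d) (fun j x =>
    (if x j then p ⟨j, cfgOf Par x j⟩ else 1 - p ⟨j, cfgOf Par x j⟩) *
      (if j = i then φ x * ((if x j then 1 else 0) - p ⟨j, cfgOf Par x j⟩) else 1))
    (fun j => if j = i then 0 else 1) ?_ ?_
  · simp only [Finset.prod_mul_distrib, Finset.prod_ite_eq', Finset.mem_univ, if_true] at this
    rw [this]
    
  · intro j x y h
    have h1 := cfg_congr hPar j x y (fun j' hj => h j' hj.le)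
    simp only [h j le_rfl, h1]
    congr 1
    by_cases hj : j = i
    · subst hj
      simp only [if_true]
      rw [hφ x y (fun j' hj => h j' hj.le)]
    · simp [hj]
  · intro j x
    simp only [cfg_flip hPar]
    by_cases hj : j = i
    · subst hj
      have : φ (Function.update x j (!x j)) = φ x := by
        apply hφ; intro j' hj'; simp [hj'.ne]
      simp only [this, if_true]
      cases hx : x j <;> simp <;> ring
    · simp only [hj, if_false]
      cases hx : x j <;> simp

theorem mgf_one {p s : ℝ} (hp : p ∈ Set.Icc (0:ℝ) 1) :
    p * Real.exp (s * (1 - p)) + (1 - p) * Real.exp (s * (0 - p)) ≤ Real.exp (s ^ 2 / 2) := by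
  obtain ⟨h0, h1⟩ := hp
  have conv : ∀ x : ℝ, -1 ≤ x → x ≤ 1 →
      Real.exp (s * x) ≤ (1 + x) / 2 * Real.exp s + (1 - x) / 2 * Real.exp (-s) := by
    intro x hx1 hx2
    have h0 := convexOn_exp.2
    have := h0 (Set.mem_univ s) (Set.mem_univ (-s))
      (show 0 ≤ (1 + x) / 2 by linarith) (show 0 ≤ (1 - x) / 2 by linarith) (by ring)
    simp only [smul_eq_mul] at this
    rw [show s * x = (1 + x) / 2 * s + (1 - x) / 2 * -s by ring]
    exact this
  have a1 := conv (1 - p) (by linarith) (by linarith)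
  have a2 := conv (0 - p) (by linarith) (by linarith)
  have a3 := Real.cosh_le_exp_half_sq s
  rw [Real.cosh_eq] at a3
  nlinarith [mul_le_mul_of_nonneg_left a1 h0, mul_le_mul_of_nonneg_left a2 (by linarith : 0 ≤ 1 - p)]

theorem bn_mgf {d : ℕ} {Par : Fin d → Finset (Fin d)}
    (hPar : ∀ i : Fin d, ∀ j ∈ Par i, j < i) (p : BNIdx d Par → ℝ)
    (hp : ∀ k, p k ∈ Set.Icc (0:ℝ) 1) (w : BNIdx d Par → ℝ) :
    expec (bnDist Par p) (fun x => Real.exp (∑ i, w ⟨i, cfgOf Par x i⟩ *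
      ((if x i then 1 else 0) - p ⟨i, cfgOf Par x i⟩))) ≤ Real.exp ((∑ k, w k ^ 2) / 2) := by
  set Z : BNIdx d Par → ℝ := fun k =>
    p k * Real.exp (w k * (1 - p k)) + (1 - p k) * Real.exp (w k * (0 - p k)) with hZ
  have Zpos : ∀ k, 0 < Z k := by
    intro k
    obtain ⟨h0, h1⟩ := hp k
    have e1 := Real.exp_pos (w k * (1 - p k))
    have e2 := Real.exp_pos (w k * (0 - p k))
    simp only [hZ]
    rcases h0.eq_or_lt with h | h
    · rw [← h]; simp
    · have := mul_pos h e1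
      have := mul_nonneg (sub_nonneg.2 h1) e2.le
      linarith
  set g : Fin d → (Fin d → Bool) → ℝ := fun j x =>
    (if x j then p ⟨j, cfgOf Par x j⟩ else 1 - p ⟨j, cfgOf Par x j⟩) *
      Real.exp (w ⟨j, cfgOf Par x j⟩ * ((if x j then 1 else 0) - p ⟨j, cfgOf Par x j⟩)) /
      Z ⟨j, cfgOf Par x j⟩ with hg
  have h1 : ∑ x, ∏ j, g j x = ∏ j : Fin d, (1:ℝ) := by
    apply sum_prod_seq
    · intro i x y h
      simp only [hg]
      rw [h i le_rfl, cfg_congr hPar i x y (fun j hj => h j hj.le)]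
    · intro i x
      simp only [hg]
      rw [cfg_flip hPar, ← add_div, div_eq_one_iff_eq (Zpos _).ne']
      simp only [hZ]
      cases hx : x i <;> simp
      ring
  have gnn : ∀ j x, 0 ≤ g j x := by
    intro j x
    obtain ⟨h0, h1⟩ := hp ⟨j, cfgOf Par x j⟩
    apply div_nonneg _ (Zpos _).le
    apply mul_nonneg _ (Real.exp_pos _).le
    split_ifs <;> linarith
  have h2 : ∀ x, bnDist Par p x * Real.exp (∑ i, w ⟨i, cfgOf Par x i⟩ *
      ((if x i then 1 else 0) - p ⟨i, cfgOf Par x i⟩))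
      ≤ (∏ j, g j x) * Real.exp ((∑ k, w k ^ 2) / 2) := by
    intro x
    have e : bnDist Par p x * Real.exp (∑ i, w ⟨i, cfgOf Par x i⟩ *
      ((if x i then 1 else 0) - p ⟨i, cfgOf Par x i⟩))
      = (∏ j, g j x) * ∏ j, Z ⟨j, cfgOf Par x j⟩ := by
      unfold bnDist
      rw [Real.exp_sum, ← Finset.prod_mul_distrib, ← Finset.prod_mul_distrib]
      apply Finset.prod_congr rfl
      intro i _
      simp only [hg]
      rw [div_mul_cancel₀ _ (Zpos _).ne']
    rw [e]
    apply mul_le_mul_of_nonneg_left _ (Finset.prod_nonneg fun j _ => gnn j x)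
    calc ∏ j, Z ⟨j, cfgOf Par x j⟩ ≤ ∏ j, Real.exp (w ⟨j, cfgOf Par x j⟩ ^ 2 / 2) :=
          Finset.prod_le_prod (fun j _ => (Zpos _).le) (fun j _ => mgf_one (hp _))
      _ = Real.exp (∑ j, w ⟨j, cfgOf Par x j⟩ ^ 2 / 2) := (Real.exp_sum _ _).symm
      _ ≤ _ := by
        apply Real.exp_le_exp.2
        rw [← Finset.sum_div]
        apply div_le_div_of_nonneg_right _ (by norm_num)
        rw [Fintype.sum_sigma]
        apply Finset.sum_le_sum
        intro i _
        exact Finset.single_le_sum (f := fun a => w ⟨i, a⟩ ^ 2) (fun a _ => sq_nonneg _) (Finset.mem_univ _)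
  calc _ ≤ ∑ x, (∏ j, g j x) * Real.exp ((∑ k, w k ^ 2) / 2) :=
        Finset.sum_le_sum fun x _ => h2 x
    _ = _ := by rw [← Finset.sum_mul, h1]; simp

section expecLemmas
variable {d : ℕ} (R : (Fin d → Bool) → ℝ)

theorem expec_add (f g : (Fin d → Bool) → ℝ) :
    expec R (fun x => f x + g x) = expec R f + expec R g := by
  simp [expec, mul_add, Finset.sum_add_distrib]

theorem expec_sub (f g : (Fin d → Bool) → ℝ) :
    expec R (fun x => f x - g x) = expec R f - expec R g := by
  simp [expec, mul_sub, Finset.sum_sub_distrib]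

theorem expec_cmul (c : ℝ) (f : (Fin d → Bool) → ℝ) :
    expec R (fun x => c * f x) = c * expec R f := by
  simp only [expec, Finset.mul_sum]
  exact Finset.sum_congr rfl fun x _ => by ring

theorem expec_fsum {ι : Type*} (s : Finset ι) (f : ι → (Fin d → Bool) → ℝ) :
    expec R (fun x => ∑ k ∈ s, f k x) = ∑ k ∈ s, expec R (f k) := by
  simp only [expec, Finset.mul_sum]
  exact Finset.sum_comm

theorem expec_mono {R} (hR : ∀ x, 0 ≤ R x) {f g : (Fin d → Bool) → ℝ} (h : ∀ x, f x ≤ g x) :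
    expec R f ≤ expec R g :=
  Finset.sum_le_sum fun x _ => mul_le_mul_of_nonneg_left (h x) (hR x)

theorem expec_nonneg {R} (hR : ∀ x, 0 ≤ R x) {f : (Fin d → Bool) → ℝ} (h : ∀ x, 0 ≤ f x) :
    0 ≤ expec R f :=
  Finset.sum_nonneg fun x _ => mul_nonneg (hR x) (h x)

theorem expec_const {R : (Fin d → Bool) → ℝ} (hR : ∑ x, R x = 1) (c : ℝ) : expec R (fun _ => c) = c := by
  simp [expec, ← Finset.sum_mul, hR]

theorem expec_sq {R} (hR : IsProbDist R) (f : (Fin d → Bool) → ℝ) :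
    (expec R f) ^ 2 ≤ expec R (fun x => f x ^ 2) := by
  have h : 0 ≤ expec R (fun x => (f x - expec R f) ^ 2) :=
    expec_nonneg hR.1 fun x => sq_nonneg _
  have e : (fun x => (f x - expec R f) ^ 2)
      = fun x => (f x ^ 2 - (2 * expec R f) * f x) + expec R f ^ 2 := by
    funext x; ring
  rw [e, expec_add, expec_sub, expec_cmul, expec_const hR.2] at h
  nlinarith

end expecLemmas

/-- projection of `F(x,q) - q` on `v` -/
noncomputable def Gv {d : ℕ} (Par : Fin d → Finset (Fin d)) (q v : BNIdx d Par → ℝ)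
    (x : Fin d → Bool) : ℝ := ∑ k, v k * (Fvec Par x q k - q k)

/-- indicator of a parental configuration -/
noncomputable def ind {d : ℕ} (Par : Fin d → Finset (Fin d)) (x : Fin d → Bool)
    (k : BNIdx d Par) : ℝ := if cfgOf Par x k.1 = k.2 then 1 else 0

section bn
variable {d : ℕ} {Par : Fin d → Finset (Fin d)}

theorem ind_cases (x : Fin d → Bool) (k : BNIdx d Par) : ind Par x k = 0 ∨ ind Par x k = 1 := by
  unfold ind; split_ifs <;> simp

theorem expec_ind (R : (Fin d → Bool) → ℝ) (k : BNIdx d Par) :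
    expec R (fun x => ind Par x k) = prCfg Par R k := by
  simp [expec, ind, prCfg]

theorem F_ind (x : Fin d → Bool) (q : BNIdx d Par → ℝ) (k : BNIdx d Par) :
    Fvec Par x q k - q k = ind Par x k * ((if x k.1 then 1 else 0) - q k) := by
  unfold Fvec ind; split_ifs <;> simp

theorem F_ind' (x : Fin d → Bool) (q : BNIdx d Par → ℝ) (k : BNIdx d Par) :
    Fvec Par x q k - q k = ind Par x k * ((if x k.1 then 1 else 0) - q ⟨k.1, cfgOf Par x k.1⟩) := by
  rw [F_ind]
  unfold ind
  split_ifs with h <;> simp [h]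

theorem F_split (x : Fin d → Bool) (p q : BNIdx d Par → ℝ) (k : BNIdx d Par) :
    Fvec Par x q k - q k = (Fvec Par x p k - p k) + ind Par x k * (p k - q k) := by
  rw [F_ind, F_ind]; ring

theorem F_sq (x : Fin d → Bool) (q : BNIdx d Par → ℝ) (hq : ∀ k, q k ∈ Set.Icc (0:ℝ) 1)
    (k : BNIdx d Par) : (Fvec Par x q k - q k) ^ 2 ≤ 1 := by
  rw [F_ind]
  obtain ⟨h0, h1⟩ := hq k
  rcases ind_cases x k with h | h <;> rw [h] <;> split_ifs <;> nlinarith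

theorem Gv_eq (p v : BNIdx d Par → ℝ) (x : Fin d → Bool) :
    Gv Par p v x = ∑ i, v ⟨i, cfgOf Par x i⟩ *
      ((if x i then 1 else 0) - p ⟨i, cfgOf Par x i⟩) := by
  unfold Gv
  rw [Fintype.sum_sigma]
  apply Finset.sum_congr rfl
  intro i _
  rw [Finset.sum_eq_single (cfgOf Par x i)]
  · simp [Fvec]
  · intro b _ hb
    simp [Fvec, Ne.symm hb]
  · simp

theorem Gv_split (p q v : BNIdx d Par → ℝ) (x : Fin d → Bool) :
    Gv Par q v x = Gv Par p v x + ∑ k, v k * (ind Par x k * (p k - q k)) := by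
  unfold Gv
  rw [← Finset.sum_add_distrib]
  apply Finset.sum_congr rfl
  intro k _
  rw [F_split x p q k]; ring

theorem ind_dep (hPar : ∀ i : Fin d, ∀ j ∈ Par i, j < i) (k : BNIdx d Par) (x y : Fin d → Bool)
    (h : ∀ j, j < k.1 → x j = y j) : ind Par x k = ind Par y k := by
  unfold ind; rw [cfg_congr hPar k.1 x y h]

theorem EH (hPar : ∀ i : Fin d, ∀ j ∈ Par i, j < i) (p : BNIdx d Par → ℝ) (k : BNIdx d Par) :
    expec (bnDist Par p) (fun x => Fvec Par x p k - p k) = 0 := by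
  simp only [F_ind']
  exact bn_zero hPar p k.1 (fun x => ind Par x k) (ind_dep hPar k)

theorem EHH_lt (hPar : ∀ i : Fin d, ∀ j ∈ Par i, j < i) (p : BNIdx d Par → ℝ) (k l : BNIdx d Par)
    (h : k.1 < l.1) :
    expec (bnDist Par p) (fun x => (Fvec Par x p k - p k) * (Fvec Par x p l - p l)) = 0 := by
  have e : ∀ x, (Fvec Par x p k - p k) * (Fvec Par x p l - p l)
     = (ind Par x k * ((if x k.1 then 1 else 0) - p k) * ind Par x l) *
       ((if x l.1 then 1 else 0) - p ⟨l.1, cfgOf Par x l.1⟩) := by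
    intro x; rw [F_ind' x p l, F_ind x p k]; ring
  simp only [e]
  refine bn_zero hPar p l.1 
    (fun x => ind Par x k * ((if x k.1 then 1 else 0) - p k) * ind Par x l) ?_
  intro x y hxy
  beta_reduce
  rw [ind_dep hPar l x y hxy, ind_dep hPar k x y (fun j hj => hxy j (hj.trans h)), hxy _ h]

theorem EHH (hPar : ∀ i : Fin d, ∀ j ∈ Par i, j < i) (p : BNIdx d Par → ℝ) (k l : BNIdx d Par)
    (h : k ≠ l) :
    expec (bnDist Par p) (fun x => (Fvec Par x p k - p k) * (Fvec Par x p l - p l)) = 0 := by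
  rcases lt_trichotomy k.1 l.1 with h1 | h1 | h1
  · exact EHH_lt hPar p k l h1
  · have : ∀ x, (Fvec Par x p k - p k) * (Fvec Par x p l - p l) = 0 := by
      intro x
      obtain ⟨i, a⟩ := k
      obtain ⟨j, b⟩ := l
      simp only at h1
      subst h1
      have hab : a ≠ b := fun h' => h (by rw [h'])
      by_cases ha : cfgOf Par x i = a
      · have hb : ¬ cfgOf Par x i = b := fun h' => hab (ha.symm.trans h')
        simp [Fvec, hb]
      · simp [Fvec, ha]
    simp [this, expec]
  · have := EHH_lt hPar p l k h1
    simpa only [mul_comm] using this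

theorem quad_eq (R : (Fin d → Bool) → ℝ) (q v : BNIdx d Par → ℝ) :
    expec R (fun x => Gv Par q v x ^ 2)
      = ∑ k, ∑ l, v k * covM0 Par R q k l * v l
        + ∑ k, v k ^ 2 * expec R (fun x => (Fvec Par x q k - q k) ^ 2) := by
  have e : (fun x => Gv Par q v x ^ 2) = fun x => ∑ k, ∑ l, (v k * v l) *
      ((Fvec Par x q k - q k) * (Fvec Par x q l - q l)) := by
    funext x
    rw [sq, Gv, Finset.sum_mul_sum]
    refine Finset.sum_congr rfl fun k _ => Finset.sum_congr rfl fun l _ => by ring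
  rw [e, expec_fsum]
  simp only [expec_fsum, expec_cmul]
  rw [← Finset.sum_add_distrib]
  refine Finset.sum_congr rfl fun k _ => ?_
  have e2 : v k ^ 2 * expec R (fun x => (Fvec Par x q k - q k) ^ 2)
     = ∑ l, if k = l then v k ^ 2 * expec R (fun x => (Fvec Par x q k - q k) ^ 2) else 0 := by
    simp
  rw [e2, ← Finset.sum_add_distrib]
  refine Finset.sum_congr rfl fun l _ => ?_
  unfold covM0 covM
  by_cases h : k = l
  · subst h
    simp [sq]
  · simp [h]; ring

theorem EHsq (hPar : ∀ i : Fin d, ∀ j ∈ Par i, j < i) (p v : BNIdx d Par → ℝ) :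
    expec (bnDist Par p) (fun x => Gv Par p v x ^ 2)
      = ∑ k, v k ^ 2 * expec (bnDist Par p) (fun x => (Fvec Par x p k - p k) ^ 2) := by
  rw [quad_eq]
  have : ∀ k l, covM0 Par (bnDist Par p) p k l = 0 := by
    intro k l
    unfold covM0 covM
    split_ifs with h
    · rfl
    · exact EHH hPar p k l h
  simp [this]

theorem EHsq_le (hPar : ∀ i : Fin d, ∀ j ∈ Par i, j < i) (p v : BNIdx d Par → ℝ)
    (hp : ∀ k, p k ∈ Set.Icc (0:ℝ) 1) (hv : ∑ k, v k ^ 2 = 1) :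
    expec (bnDist Par p) (fun x => Gv Par p v x ^ 2) ≤ 1 := by
  rw [EHsq hPar, ← hv]
  refine Finset.sum_le_sum fun k _ => ?_
  have : expec (bnDist Par p) (fun x => (Fvec Par x p k - p k) ^ 2) ≤ 1 := by
    rw [← expec_const (bn_sum hPar p) 1]
    exact expec_mono (bn_nonneg hp) fun x => F_sq x p hp k
  nlinarith [sq_nonneg (v k)]

theorem Dsq_le (v δ : BNIdx d Par → ℝ) (hv : ∑ k, v k ^ 2 = 1) (x : Fin d → Bool) :
    (∑ k, v k * (ind Par x k * δ k)) ^ 2 ≤ ∑ k, δ k ^ 2 * ind Par x k := by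
  refine (Finset.sum_mul_sq_le_sq_mul_sq _ _ _).trans ?_
  rw [hv, one_mul]
  refine Finset.sum_le_sum fun k _ => ?_
  rcases ind_cases x k with h | h <;> rw [h] <;> simp

/-- Lower bound on the off-diagonal quadratic form under `P`. -/
theorem offdiag (hPar : ∀ i : Fin d, ∀ j ∈ Par i, j < i) (p q v : BNIdx d Par → ℝ)
    (hp : ∀ k, p k ∈ Set.Icc (0:ℝ) 1) (hv : ∑ k, v k ^ 2 = 1) (S η : ℝ) (hη : 0 < η)
    (hS : S = ∑ k, prCfg Par (bnDist Par p) k * (p k - q k) ^ 2) :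
    -(η + S / η + S) ≤ expec (bnDist Par p) (fun x => Gv Par q v x ^ 2)
      - ∑ k, v k ^ 2 * expec (bnDist Par p) (fun x => (Fvec Par x q k - q k) ^ 2) := by
  set P := bnDist Par p with hP
  have hP0 : ∀ x, 0 ≤ P x := bn_nonneg hp
  set D : (Fin d → Bool) → ℝ := fun x => ∑ k, v k * (ind Par x k * (p k - q k)) with hD
  have hπ : ∀ k, 0 ≤ prCfg Par P k := by
    intro k; rw [← expec_ind]
    exact expec_nonneg hP0 fun x => by rcases ind_cases x k with h | h <;> rw [h] <;> norm_num
  have hDS : expec P (fun x => D x ^ 2) ≤ S := by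
    calc _ ≤ expec P (fun x => ∑ k, (p k - q k) ^ 2 * ind Par x k) :=
          expec_mono hP0 fun x => Dsq_le v (fun k => p k - q k) hv x
      _ = S := by
        rw [expec_fsum, hS]
        simp only [expec_cmul, expec_ind]
        exact Finset.sum_congr rfl fun k _ => mul_comm _ _
  have hDnn : 0 ≤ expec P (fun x => D x ^ 2) := expec_nonneg hP0 fun x => sq_nonneg _
  have hH := EHsq_le hPar p v hp hv
  have hHeq := EHsq hPar p v
  have hk : ∀ k, expec P (fun x => (Fvec Par x q k - q k) ^ 2)
      = expec P (fun x => (Fvec Par x p k - p k) ^ 2) + prCfg Par P k * (p k - q k) ^ 2 := by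
    intro k
    have e : (fun x => (Fvec Par x q k - q k) ^ 2) = fun x => ((Fvec Par x p k - p k) ^ 2
        + (2 * (p k - q k)) * (Fvec Par x p k - p k)) + (p k - q k) ^ 2 * ind Par x k := by
      funext x
      rw [F_split x p q k, F_ind x p k]
      rcases ind_cases x k with h | h <;> rw [h] <;> ring
    rw [e, expec_add, expec_add, expec_cmul, expec_cmul, EH hPar, expec_ind]
    ring
  have hsum : ∑ k, v k ^ 2 * expec P (fun x => (Fvec Par x q k - q k) ^ 2)
      = expec P (fun x => Gv Par p v x ^ 2)
        + ∑ k, v k ^ 2 * (prCfg Par P k * (p k - q k) ^ 2) := by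
    rw [hHeq, ← Finset.sum_add_distrib]
    exact Finset.sum_congr rfl fun k _ => by rw [hk k]; ring
  have hvS : ∑ k, v k ^ 2 * (prCfg Par P k * (p k - q k) ^ 2) ≤ S := by
    rw [hS]
    refine Finset.sum_le_sum fun k _ => ?_
    have h1 : v k ^ 2 ≤ 1 := by
      rw [← hv]
      exact Finset.single_le_sum (f := fun k => v k ^ 2) (fun k _ => sq_nonneg _) (Finset.mem_univ k)
    have h2 : 0 ≤ prCfg Par P k * (p k - q k) ^ 2 := mul_nonneg (hπ k) (sq_nonneg _)
    nlinarith
  have hG : expec P (fun x => Gv Par p v x ^ 2) + (-η) * expec P (fun x => Gv Par p v x ^ 2)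
      - (1 / η) * expec P (fun x => D x ^ 2) ≤ expec P (fun x => Gv Par q v x ^ 2) := by
    rw [← expec_cmul, ← expec_cmul, ← expec_add, ← expec_sub]
    apply expec_mono hP0
    intro x
    rw [Gv_split p q v x]
    change _ ≤ (Gv Par p v x + D x) ^ 2
    generalize Gv Par p v x = a
    generalize D x = b
    have : 0 ≤ (η * a + b) ^ 2 / η := by positivity
    have e : (η * a + b) ^ 2 / η = η * a ^ 2 + 2 * a * b + 1 / η * b ^ 2 := by
      field_simp; ring
    nlinarith [sq_nonneg b]
  have h5 : (1 / η) * expec P (fun x => D x ^ 2) ≤ S / η := by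
    rw [one_div_mul_eq_div]; gcongr
  rw [hsum]
  nlinarith

theorem tail_pt (T t : ℝ) (hT : 1 ≤ T) :
    t ^ 2 ≤ 16 * T ^ 2 + Real.exp (-(11 / 2 * T ^ 2)) *
      (Real.exp (3 * T * t) + Real.exp (-(3 * T * t))) := by
  have key : ∀ t : ℝ, 0 ≤ t → t ^ 2 ≤ 16 * T ^ 2 + Real.exp (-(11 / 2 * T ^ 2)) *
      Real.exp (3 * T * t) := by
    intro t ht
    by_cases h : t ≤ 4 * T
    · have : 0 ≤ Real.exp (-(11 / 2 * T ^ 2)) * Real.exp (3 * T * t) := by positivity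
      nlinarith
    · push Not at h
      rw [← Real.exp_add]
      have h1 : Real.exp (3 / 2 * T * t) ≤ Real.exp (-(11 / 2 * T ^ 2) + 3 * T * t) := by
        apply Real.exp_le_exp.2; nlinarith
      have h2 := Real.quadratic_le_exp_of_nonneg (show 0 ≤ 3 / 2 * T * t by positivity)
      have h3 : t ^ 2 ≤ (3 / 2 * T * t) ^ 2 / 2 := by
        have : 1 * t ^ 2 ≤ T ^ 2 * t ^ 2 := by gcongr; nlinarith
        nlinarith [sq_nonneg t]
      have : 0 ≤ 3 / 2 * T * t := by positivity
      nlinarith [sq_nonneg T]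
  have e1 := Real.exp_pos (-(11 / 2 * T ^ 2))
  have e2 := Real.exp_pos (3 * T * t)
  have e3 := Real.exp_pos (-(3 * T * t))
  rcases le_total 0 t with h | h
  · have := key t h
    nlinarith [mul_pos e1 e3]
  · have := key (-t) (by linarith)
    rw [show 3 * T * -t = -(3 * T * t) by ring] at this
    nlinarith [mul_pos e1 e2]

theorem tail (hPar : ∀ i : Fin d, ∀ j ∈ Par i, j < i) (p v : BNIdx d Par → ℝ)
    (hp : ∀ k, p k ∈ Set.Icc (0:ℝ) 1) (hv : ∑ k, v k ^ 2 = 1) (L : (Fin d → Bool) → ℝ)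
    (hL : IsProbDist L) (wP wL ε : ℝ) (hwL : 0 ≤ wL) (hwL2 : wL ≤ 2 * ε) (hwP : 0 ≤ wP)
    (hwP2 : wP ≤ 2) (hε : 0 < ε) (hl : 1 ≤ Real.log (1 / ε))
    (hdom : ∀ x, wL * L x ≤ wP * bnDist Par p x) :
    wL * expec L (fun x => Gv Par p v x ^ 2) ≤ 36 * (ε * Real.log (1 / ε)) := by
  set T := Real.sqrt (Real.log (1 / ε)) with hT
  have hT2 : T ^ 2 = Real.log (1 / ε) := Real.sq_sqrt (by linarith)
  have hT1 : 1 ≤ T := by rw [hT]; exact Real.one_le_sqrt.2 hl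
  have mg : ∀ s : ℝ, expec (bnDist Par p) (fun x => Real.exp (s * Gv Par p v x))
      ≤ Real.exp (s ^ 2 / 2) := by
    intro s
    have := bn_mgf hPar p hp (fun k => s * v k)
    simp only [mul_pow, ← Finset.mul_sum, hv, mul_one] at this
    refine le_trans (le_of_eq ?_) this
    congr 1
    funext x
    rw [Gv_eq, Finset.mul_sum]
    congr 1
    exact Finset.sum_congr rfl fun i _ => by ring
  set B : (Fin d → Bool) → ℝ := fun x => Real.exp (3 * T * Gv Par p v x)
    + Real.exp (-(3 * T) * Gv Par p v x) with hB
  have hBP : expec (bnDist Par p) B ≤ 2 * Real.exp (9 / 2 * T ^ 2) := by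
    rw [hB, expec_add]
    have h1 := mg (3 * T)
    have h2 := mg (-(3 * T))
    rw [show (3 * T) ^ 2 / 2 = 9 / 2 * T ^ 2 by ring] at h1
    rw [show (-(3 * T)) ^ 2 / 2 = 9 / 2 * T ^ 2 by ring] at h2
    linarith
  have hLB : wL * expec L B ≤ wP * expec (bnDist Par p) B := by
    unfold expec
    rw [Finset.mul_sum, Finset.mul_sum]
    refine Finset.sum_le_sum fun x _ => ?_
    rw [← mul_assoc, ← mul_assoc]
    exact mul_le_mul_of_nonneg_right (hdom x) (by simp only [hB]; positivity)
  have h1 : expec L (fun x => Gv Par p v x ^ 2)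
      ≤ 16 * T ^ 2 + Real.exp (-(11 / 2 * T ^ 2)) * expec L B := by
    rw [← expec_cmul]
    nth_rewrite 1 [← expec_const hL.2 (16 * T ^ 2)]
    rw [← expec_add]
    refine expec_mono hL.1 fun x => ?_
    have := tail_pt T (Gv Par p v x) hT1
    simp only [hB]
    rw [neg_mul]
    exact this
  have he : Real.exp (-(11 / 2 * T ^ 2)) * Real.exp (9 / 2 * T ^ 2) = ε := by
    rw [← Real.exp_add, show -(11 / 2 * T ^ 2) + 9 / 2 * T ^ 2 = - T ^ 2 by ring, hT2,
      one_div, Real.log_inv, neg_neg, Real.exp_log hε]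
  have e1 := Real.exp_pos (-(11 / 2 * T ^ 2))
  calc wL * expec L (fun x => Gv Par p v x ^ 2)
      ≤ wL * (16 * T ^ 2 + Real.exp (-(11 / 2 * T ^ 2)) * expec L B) := by gcongr
    _ = 16 * wL * T ^ 2 + Real.exp (-(11 / 2 * T ^ 2)) * (wL * expec L B) := by ring
    _ ≤ 16 * (2 * ε) * T ^ 2 + Real.exp (-(11 / 2 * T ^ 2)) *
        (2 * (2 * Real.exp (9 / 2 * T ^ 2))) := by
      have : wP * expec (bnDist Par p) B ≤ 2 * (2 * Real.exp (9 / 2 * T ^ 2)) := by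
        refine mul_le_mul hwP2 hBP (expec_nonneg (bn_nonneg hp) fun x => ?_) (by norm_num)
        simp only [hB]; positivity
      have := hLB.trans this
      gcongr
    _ = 32 * (ε * T ^ 2) + 4 * ε := by linear_combination 4 * he
    _ ≤ _ := by rw [hT2]; nlinarith

end bn

theorem quad_spec {ι : Type*} [Fintype ι] [DecidableEq ι] (A : Matrix ι ι ℝ) (v : ι → ℝ)
    (hv : ∑ k, v k ^ 2 = 1) : |∑ k, ∑ l, v k * A k l * v l| ≤ specNorm A := by
  set w : EuclideanSpace ℝ ι := WithLp.toLp 2 v with hw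
  have hwn : ‖w‖ = 1 := by
    rw [EuclideanSpace.norm_eq]
    simp [hw, hv]
  have h1 : ∑ k, ∑ l, v k * A k l * v l = inner ℝ w (Matrix.toEuclideanCLM (𝕜 := ℝ) A w) := by
    rw [PiLp.inner_apply]
    refine Finset.sum_congr rfl fun k _ => ?_
    simp only [hw, Matrix.ofLp_toEuclideanCLM, Matrix.mulVec, dotProduct]
    simp [Finset.sum_mul, Finset.mul_sum]
    exact Finset.sum_congr rfl fun l _ => by ring
  rw [h1]
  calc _ ≤ ‖w‖ * ‖Matrix.toEuclideanCLM (𝕜 := ℝ) A w‖ := abs_real_inner_le_norm _ _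
    _ ≤ ‖w‖ * (‖Matrix.toEuclideanCLM (𝕜 := ℝ) A‖ * ‖w‖) := by
      gcongr; exact ContinuousLinearMap.le_opNorm _ _
    _ = specNorm A := by rw [hwn]; simp [specNorm]

set_option maxHeartbeats 2000000 in
theorem final_num {ε α β m l wP wE wL N S η a b QE QL : ℝ} (hε : 0 < ε) (hε1 : ε < 1 / 10 ^ 8)
    (hβ : Real.sqrt ε ≤ β) (hβ1 : β ≤ 1) (hα : 0 < α) (hαβ : α ≤ β + 3 * ε) (hl : 1 ≤ l)
    (hm : 10 ^ 7 * ε * l / α ≤ m) (hwE : 0 ≤ wE) (hwL : 0 ≤ wL) (hw : wE + wL ≤ 2 * ε)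
    (hwP : wP + wE - wL = 1) (hN : 0 ≤ N) (hS : β * S ≤ N ^ 2) (hη : η = 1000 * ε / β)
    (hmain : wP * N ≤ ε + a + b)
    (ha : a ^ 2 ≤ wE * QE) (hb : b ^ 2 ≤ wL * QL) (hS0 : 0 ≤ S) (hQL0 : 0 ≤ QL)
    (hQL : QL ≤ 72 * (ε * l) + 4 * N ^ 2)
    (hQE : QE ≤ m + 3 * ε + wP * (η + S / η + S) + QL) :
    N / β ≤ 3 * Real.sqrt (ε * m) / α := by
  have hsq : Real.sqrt ε ^ 2 = ε := Real.sq_sqrt hε.le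
  have hs0 : 0 < Real.sqrt ε := Real.sqrt_pos.2 hε
  have hs1 : Real.sqrt ε ≤ 1 / 10 ^ 4 := by
    apply Real.sqrt_le_iff.2; constructor <;> [norm_num; linarith]
  have hβ0 : 0 < β := by linarith
  have hα2 : α ≤ 1.01 * β := by nlinarith
  have hm0 : 0 ≤ m := le_trans (by positivity) hm
  set Y := ε * m with hY
  have hY0 : 0 ≤ Y := by positivity
  have hYs : Real.sqrt Y ^ 2 = Y := Real.sq_sqrt hY0
  have hYs0 : 0 ≤ Real.sqrt Y := Real.sqrt_nonneg _
  have hm2 : 10 ^ 7 * ε * l ≤ m * α := (div_le_iff₀ hα).1 hm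
  have hm3 : 10 ^ 7 * ε * l ≤ m * (1.01 * β) := hm2.trans (by gcongr)
  have hY1 : 10 ^ 7 * (ε ^ 2 * l) ≤ 1.01 * (Y * β) := by
    have := mul_le_mul_of_nonneg_left hm3 hε.le
    rw [hY]; linarith
  have hYβ : Y * β ≤ Y * 1 := by gcongr
  have hl2 : ε ^ 2 * 1 ≤ ε ^ 2 * l := by gcongr
  have hY2 : 9 * 10 ^ 6 * (ε ^ 2 * l) ≤ Y := by
    have : 0 ≤ ε ^ 2 * l := by positivity
    linarith
  have hY3 : 9 * 10 ^ 6 * ε ^ 2 ≤ Y := by linarith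
  have hεη : ε * η ≤ Y / 9000 := by
    rw [hη, show ε * (1000 * ε / β) = (1000 * ε ^ 2) / β by ring, div_le_iff₀ hβ0]
    have : 0 ≤ Y * β := by positivity
    linarith
  have hSη : ε * (S / η) ≤ N ^ 2 / 1000 := by
    have : ε * (S / η) = β * S / 1000 := by rw [hη]; field_simp
    rw [this]; linarith
  have hεS : ε * S ≤ N ^ 2 / 10 ^ 4 := by
    have h1 : ε ≤ 1 / 10 ^ 4 * β := by
      calc ε = Real.sqrt ε * Real.sqrt ε := by rw [← hsq]; ring_nf; simp
        _ ≤ 1 / 10 ^ 4 * β := by gcongr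
    have := mul_le_mul_of_nonneg_right h1 hS0
    linarith
  have hη0 : 0 < η := by rw [hη]; positivity
  have hSη0 : 0 ≤ S / η := by positivity
  have hQLε : ε * QL ≤ 72 * (ε ^ 2 * l) + 4 * (ε * N ^ 2) := by
    have := mul_le_mul_of_nonneg_left hQL hε.le
    linarith
  have h4 : ε * N ^ 2 ≤ 1 / 10 ^ 8 * N ^ 2 := by gcongr
  have hwP1 : 0.99 ≤ wP := by linarith
  have hwP2 : wP ≤ 1.01 := by linarith
  have hb2 : b ^ 2 ≤ (0.1 * Real.sqrt Y + 0.1 * N) ^ 2 := by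
    have h1 : wL * QL ≤ 2 * ε * QL := by gcongr; linarith
    rw [show (0.1 * Real.sqrt Y + 0.1 * N) ^ 2 = 0.01 * Real.sqrt Y ^ 2
      + 0.02 * (Real.sqrt Y * N) + 0.01 * N ^ 2 by ring, hYs]
    linarith [mul_nonneg hYs0 hN, sq_nonneg N]
  have ha2 : a ^ 2 ≤ (1.5 * Real.sqrt Y + 0.1 * N) ^ 2 := by
    set U := m + 3 * ε + wP * (η + S / η + S) + QL with hU
    have hU0 : 0 ≤ U := by positivity
    have h1 : wE * QE ≤ 2 * ε * U := by
      calc wE * QE ≤ wE * U := by gcongr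
        _ ≤ 2 * ε * U := by gcongr; linarith
    have h2 : ε * (wP * (η + S / η + S)) ≤ 1.01 * (Y / 9000 + N ^ 2 / 1000 + N ^ 2 / 10 ^ 4) := by
      have : ε * (wP * (η + S / η + S)) = wP * (ε * η + ε * (S / η) + ε * S) := by ring
      rw [this]
      have h3 : 0 ≤ ε * η + ε * (S / η) + ε * S := by positivity
      calc _ ≤ 1.01 * (ε * η + ε * (S / η) + ε * S) := by gcongr
        _ ≤ _ := by gcongr
    have h3 : 2 * ε * U = 2 * Y + 6 * ε ^ 2 + 2 * (ε * (wP * (η + S / η + S))) + 2 * (ε * QL) := by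
      rw [hU, hY]; ring
    rw [show (1.5 * Real.sqrt Y + 0.1 * N) ^ 2 = 2.25 * Real.sqrt Y ^ 2 + 0.3 * (Real.sqrt Y * N) + 0.01 * N ^ 2 by ring, hYs]
    linarith [mul_nonneg hYs0 hN, sq_nonneg N]
  have ha3 : a ≤ 1.5 * Real.sqrt Y + 0.1 * N := abs_le_of_sq_le_sq' ha2 (by positivity) |>.2
  have hb3 : b ≤ 0.1 * Real.sqrt Y + 0.1 * N := abs_le_of_sq_le_sq' hb2 (by positivity) |>.2
  have hε3 : ε ≤ 0.01 * Real.sqrt Y := by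
    have : ε ^ 2 ≤ (0.01 * Real.sqrt Y) ^ 2 := by rw [mul_pow, hYs]; linarith
    exact abs_le_of_sq_le_sq' this (by positivity) |>.2
  have hN2 : N ≤ 2.1 * Real.sqrt Y := by
    have := mul_le_mul_of_nonneg_right hwP1 hN
    linarith
  rw [div_le_div_iff₀ hβ0 hα]
  calc N * α ≤ 2.1 * Real.sqrt Y * (1.01 * β) := by gcongr
    _ ≤ 3 * Real.sqrt Y * β := by nlinarith [mul_nonneg hYs0 hβ0.le]

set_option maxHeartbeats 4000000 in
theorem table_distance_bound_in_large_spectral_norm_case :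
    ∃ C₀ : ℝ, 0 < C₀ ∧ ∃ ε₀ : ℝ, ε₀ ∈ Set.Ioo (0:ℝ) 1 ∧
      ∀ (d : ℕ), 1 ≤ d → ∀ (Par : Fin d → Finset (Fin d)),
        (∀ i : Fin d, ∀ j ∈ Par i, j < i) →
        ∀ (ε : ℝ), ε ∈ Set.Ioo 0 ε₀ →
        ∀ (p q : BNIdx d Par → ℝ),
          (∀ k, p k ∈ Set.Icc (0:ℝ) 1) → (∀ k, q k ∈ Set.Icc (0:ℝ) 1) →
        ∀ (Ptld Edist Ldist : (Fin d → Bool) → ℝ),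
          IsProbDist Ptld → IsProbDist Edist → IsProbDist Ldist →
          (∀ x, Edist x = 0 ∨ Ldist x = 0) →
        ∀ (wP wE wL : ℝ), 0 ≤ wE → 0 ≤ wL → wE + wL ≤ 2 * ε →
          wP + wE - wL = 1 →
          (∀ x, Ptld x = wP * bnDist Par p x + wE * Edist x - wL * Ldist x) →
          (∀ k : BNIdx d Par, Real.sqrt ε ≤ prCfg Par (bnDist Par p) k) →
          enorm2 (fun k : BNIdx d Par =>
            q k - expec Ptld (fun x => Fvec Par x q k)) ≤ ε →
        ∀ (M : Matrix (BNIdx d Par) (BNIdx d Par) ℝ), M.IsSymm →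
          (∀ k, M k k = 0) →
          specNorm (M - covM0 Par Ptld q) ≤ ε →
        ∀ (α : ℝ), 0 < α →
          |α - ⨅ k : BNIdx d Par, prCfg Par Ptld k| ≤ ε →
          C₀ * ε * Real.log (1 / ε) / α ≤ specNorm M →
          enorm2 (fun k : BNIdx d Par => p k - q k) ≤
            3 * Real.sqrt (ε * specNorm M) / α := by
  refine ⟨10 ^ 7, by norm_num, 1 / 10 ^ 8, by norm_num, ?_⟩
  intro d hd Par hPar ε hε p q hp hq Pt E L hPt hE hL hEL wP wE wL hwE hwL hw hwP hmix hπ hmean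
    M _ _ hM α hα hαmin hbig
  obtain ⟨hε0, hε1⟩ := hε
  have : Nonempty (BNIdx d Par) := ⟨⟨⟨0, hd⟩, fun _ => true⟩⟩
  set P := bnDist Par p with hP
  have hP0 : ∀ x, 0 ≤ P x := bn_nonneg hp
  have hP1 : ∑ x, P x = 1 := bn_sum hPar p
  have hPp : IsProbDist P := ⟨hP0, hP1⟩
  have hwP0 : 0 ≤ wP := by linarith
  have mix : ∀ g, expec Pt g = wP * expec P g + wE * expec E g - wL * expec L g := by
    intro g
    unfold expec
    rw [Finset.mul_sum, Finset.mul_sum, Finset.mul_sum, ← Finset.sum_add_distrib,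
      ← Finset.sum_sub_distrib]
    exact Finset.sum_congr rfl fun x _ => by rw [hmix x]; ring
  have hdom : ∀ x, wL * L x ≤ wP * P x := by
    intro x
    rcases hEL x with h | h
    · have h1 := hPt.1 x
      rw [hmix x, h] at h1
      linarith
    · rw [h, mul_zero]; exact mul_nonneg hwP0 (hP0 x)
  have hl : 1 ≤ Real.log (1 / ε) := by
    rw [Real.le_log_iff_exp_le (by positivity)]
    have h1 := Real.exp_one_lt_d9
    have h2 : (10:ℝ) ^ 8 ≤ 1 / ε := by
      rw [le_div_iff₀ hε0]
      linarith
    linarith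
  obtain ⟨k0, hk0⟩ := Finite.exists_min (fun k => prCfg Par P k)
  set β := prCfg Par P k0 with hβ
  have hind01 : ∀ (R : (Fin d → Bool) → ℝ), IsProbDist R → ∀ k : BNIdx d Par,
      0 ≤ prCfg Par R k ∧ prCfg Par R k ≤ 1 := by
    intro R hR k
    rw [← expec_ind]
    constructor
    · exact expec_nonneg hR.1 fun x => by rcases ind_cases x k with h | h <;> rw [h] <;> norm_num
    · rw [← expec_const hR.2 1]
      exact expec_mono hR.1 fun x => by rcases ind_cases x k with h | h <;> rw [h] <;> norm_num
  have hαβ : α ≤ β + 3 * ε := by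
    have h1 : (⨅ k : BNIdx d Par, prCfg Par Pt k) ≤ prCfg Par Pt k0 :=
      ciInf_le (Set.finite_range _).bddBelow k0
    have h2 := mix (fun x => ind Par x k0)
    simp only [expec_ind] at h2
    have h3 := (abs_le.1 hαmin).2
    obtain ⟨a1, a2⟩ := hind01 E hE k0
    obtain ⟨b1, b2⟩ := hind01 L hL k0
    obtain ⟨c1, c2⟩ := hind01 P hPp k0
    have e : wP = 1 - wE + wL := by linarith
    rw [e] at h2
    nlinarith [mul_nonneg hwE c1, mul_nonneg hwL b1, mul_le_mul_of_nonneg_left c2 hwL,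
      mul_le_mul_of_nonneg_left a2 hwE]
  have hβ1 : β ≤ 1 := (hind01 P hPp k0).2
  have hβ0 : 0 < β := lt_of_lt_of_le (Real.sqrt_pos.2 hε0) (hπ k0)
  set δ : BNIdx d Par → ℝ := fun k => p k - q k with hδ
  set π : BNIdx d Par → ℝ := fun k => prCfg Par P k with hπdef
  set N := Real.sqrt (∑ k, (π k * δ k) ^ 2) with hN
  have hN0 : 0 ≤ N := Real.sqrt_nonneg _
  have hN2 : N ^ 2 = ∑ k, (π k * δ k) ^ 2 := Real.sq_sqrt (Finset.sum_nonneg fun k _ => sq_nonneg _)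
  have hπβ : ∀ k, β ≤ π k := hk0
  have hδN2 : β ^ 2 * ∑ k, δ k ^ 2 ≤ N ^ 2 := by
    rw [hN2, Finset.mul_sum]
    refine Finset.sum_le_sum fun k _ => ?_
    rw [mul_pow]
    have := hπβ k
    gcongr
  have hδN : enorm2 δ ≤ N / β := by
    unfold enorm2
    rw [Real.sqrt_le_left (by positivity), div_pow, le_div_iff₀ (by positivity)]
    linarith
  refine hδN.trans ?_
  rcases hN0.eq_or_lt with hz | hNpos
  · rw [← hz, zero_div]; positivity
  set v : BNIdx d Par → ℝ := fun k => π k * δ k / N with hv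
  have hv1 : ∑ k, v k ^ 2 = 1 := by
    simp only [hv, div_pow]
    rw [← Finset.sum_div, ← hN2, div_self (by positivity)]
  have hEP : expec P (Gv Par q v) = N := by
    have e : Gv Par q v = fun x => ∑ k, v k * ((Fvec Par x p k - p k) + δ k * ind Par x k) := by
      funext x
      unfold Gv
      exact Finset.sum_congr rfl fun k _ => by rw [F_split x p q k]; ring
    rw [e, expec_fsum]
    simp only [expec_cmul, expec_add, EH hPar, expec_ind, hP]
    have : ∀ k, v k * (0 + δ k * prCfg Par (bnDist Par p) k) = (π k * δ k) ^ 2 / N := by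
      intro k
      simp only [hv, hπdef, hP]
      ring
    simp only [this]
    rw [← Finset.sum_div, ← hN2]
    field_simp
  have hEPt : |expec Pt (Gv Par q v)| ≤ ε := by
    have e : expec Pt (Gv Par q v) = ∑ k, v k * (expec Pt (fun x => Fvec Par x q k) - q k) := by
      unfold Gv
      rw [expec_fsum]
      refine Finset.sum_congr rfl fun k _ => ?_
      rw [expec_cmul, expec_sub, expec_const hPt.2]
    rw [e]
    apply abs_le_of_sq_le_sq _ hε0.le
    refine (Finset.sum_mul_sq_le_sq_mul_sq _ _ _).trans ?_
    rw [hv1, one_mul]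
    unfold enorm2 at hmean
    rw [Real.sqrt_le_left hε0.le] at hmean
    refine le_trans (le_of_eq ?_) hmean
    exact Finset.sum_congr rfl fun k _ => by ring
  set S := ∑ k, prCfg Par P k * (p k - q k) ^ 2 with hS
  have hS0 : 0 ≤ S := Finset.sum_nonneg fun k _ => mul_nonneg (hβ0.le.trans (hπβ k)) (sq_nonneg _)
  have hβS : β * S ≤ N ^ 2 := by
    rw [hN2, hS, Finset.mul_sum]
    refine Finset.sum_le_sum fun k _ => ?_
    have h1 := hπβ k
    have h2 : (π k * δ k) ^ 2 = π k * (π k * (p k - q k) ^ 2) := by simp only [hδ]; ring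
    rw [h2]
    exact mul_le_mul_of_nonneg_right h1 (mul_nonneg (hβ0.le.trans h1) (sq_nonneg _))
  set η := 1000 * ε / β with hη
  have hη0 : 0 < η := by positivity
  have hoff := offdiag hPar p q v hp hv1 S η hη0 hS
  have htail := tail hPar p v hp hv1 L hL wP wL ε hwL (by linarith) hwP0 (by linarith) hε0 hl hdom
  set QL := wL * expec L (fun x => Gv Par q v x ^ 2) with hQL
  set QE := wE * expec E (fun x => Gv Par q v x ^ 2) with hQE
  have hQL0 : 0 ≤ QL := mul_nonneg hwL (expec_nonneg hL.1 fun x => sq_nonneg _)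
  have hβε : ε ≤ β ^ 2 := by
    have h1 := hπ k0
    have h2 := Real.sq_sqrt hε0.le
    have h3 := Real.sqrt_nonneg ε
    nlinarith
  have hδε : ε * ∑ k, δ k ^ 2 ≤ N ^ 2 :=
    (mul_le_mul_of_nonneg_right hβε (Finset.sum_nonneg fun k _ => sq_nonneg _)).trans hδN2
  have hδ0 : 0 ≤ ∑ k, δ k ^ 2 := Finset.sum_nonneg fun k _ => sq_nonneg _
  have hQLb : QL ≤ 72 * (ε * Real.log (1 / ε)) + 4 * N ^ 2 := by
    have h1 : expec L (fun x => Gv Par q v x ^ 2)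
        ≤ 2 * expec L (fun x => Gv Par p v x ^ 2) + 2 * ∑ k, δ k ^ 2 := by
      rw [← expec_cmul]
      nth_rewrite 1 [← expec_const hL.2 (2 * ∑ k, δ k ^ 2)]
      rw [← expec_add]
      refine expec_mono hL.1 fun x => ?_
      rw [Gv_split p q v x]
      have h2 := Dsq_le v δ hv1 x
      have h3 : ∑ k, δ k ^ 2 * ind Par x k ≤ ∑ k, δ k ^ 2 := by
        refine Finset.sum_le_sum fun k _ => ?_
        rcases ind_cases x k with h | h <;> rw [h] <;> nlinarith [sq_nonneg (δ k)]
      have h4 := h2.trans h3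
      change (_ + ∑ k, v k * (ind Par x k * δ k)) ^ 2 ≤ _
      generalize (∑ k, v k * (ind Par x k * δ k)) = b at h4 ⊢
      nlinarith [sq_nonneg (Gv Par p v x - b)]
    have h5 := mul_le_mul_of_nonneg_left h1 hwL
    have h6 : wL * ∑ k, δ k ^ 2 ≤ 2 * ε * ∑ k, δ k ^ 2 :=
      mul_le_mul_of_nonneg_right (by linarith) hδ0
    linarith
  have hQEb : QE ≤ specNorm M + 3 * ε + wP * (η + S / η + S) + QL := by
    have h1 := mix (fun x => Gv Par q v x ^ 2)
    have h2 := quad_eq Pt q v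
    have h3 := (abs_le.1 (quad_spec M v hv1)).2
    have h4 := (abs_le.1 (quad_spec (M - covM0 Par Pt q) v hv1)).1
    have h5 : ∑ k, ∑ l, v k * (M - covM0 Par Pt q) k l * v l
        = ∑ k, ∑ l, v k * M k l * v l - ∑ k, ∑ l, v k * covM0 Par Pt q k l * v l := by
      simp only [Matrix.sub_apply, mul_sub, sub_mul, Finset.sum_sub_distrib]
    rw [h5] at h4
    have h6 : ∑ k, v k ^ 2 * expec Pt (fun x => (Fvec Par x q k - q k) ^ 2)
        ≤ wP * ∑ k, v k ^ 2 * expec P (fun x => (Fvec Par x q k - q k) ^ 2) + 2 * ε := by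
      have e : 2 * ε = ∑ k, v k ^ 2 * (2 * ε) := by rw [← Finset.sum_mul, hv1, one_mul]
      rw [e, Finset.mul_sum, ← Finset.sum_add_distrib]
      refine Finset.sum_le_sum fun k _ => ?_
      have m1 := mix (fun x => (Fvec Par x q k - q k) ^ 2)
      have m2 : expec E (fun x => (Fvec Par x q k - q k) ^ 2) ≤ 1 := by
        rw [← expec_const hE.2 1]
        exact expec_mono hE.1 fun x => F_sq x q hq k
      have m3 : 0 ≤ expec L (fun x => (Fvec Par x q k - q k) ^ 2) :=
        expec_nonneg hL.1 fun x => sq_nonneg _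
      have m4 : expec Pt (fun x => (Fvec Par x q k - q k) ^ 2)
          ≤ wP * expec P (fun x => (Fvec Par x q k - q k) ^ 2) + 2 * ε := by
        rw [m1]
        have := mul_le_mul_of_nonneg_left m2 hwE
        have := mul_nonneg hwL m3
        linarith
      have := mul_le_mul_of_nonneg_left m4 (sq_nonneg (v k))
      linarith
    have h7 := mul_le_mul_of_nonneg_left hoff hwP0
    linarith
  have hEsq : (wE * expec E (Gv Par q v)) ^ 2 ≤ wE * QE := by
    have := mul_le_mul_of_nonneg_left (expec_sq hE (Gv Par q v)) (sq_nonneg wE)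
    rw [hQE]; linarith
  have hLsq : (wL * expec L (Gv Par q v)) ^ 2 ≤ wL * QL := by
    have := mul_le_mul_of_nonneg_left (expec_sq hL (Gv Par q v)) (sq_nonneg wL)
    rw [hQL]; linarith
  have hmain : wP * N ≤ ε + -(wE * expec E (Gv Par q v)) + wL * expec L (Gv Par q v) := by
    have h1 := mix (Gv Par q v)
    rw [hEP] at h1
    have := (abs_le.1 hEPt).2
    linarith
  exact final_num hε0 hε1 (hπ k0) hβ1 hα hαβ hl hbig hwE hwL hw hwP hN0 hβS hη hmain
    (by rw [neg_sq]; exact hEsq) hLsq hS0 hQL0 hQLb hQEb
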